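/- arXiv:1404.1589 — 2 statements merged into one kernel-verified Lean document; each statement's English description precedes it below -/
import Mathlib

section
/- Let S be a proper *-semigroup. There is a unique A ∈ P(S)^∇ such that A = B^∇∇ for some ∇-finite B ∈ P(S)^⊥, while A^⊥ contains no ∇-finite *-annihilator other than {0} (i.e. every ∇-finite B ∈ P(S)^⊥ with B ⊆ A^⊥ equals {0}). -/
namespace Stmt10

/-- The *-annihilator `T^⊥`. -/
def pAnn {S : Type*} [Mul S] [Star S] [Zero S] (T : Set S) : Set S :=
  {s | ∀ t ∈ T, t * star s = 0 ∧ t * s = 0}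

/-- The annihilator ideal `T^∇`. -/
def nAnn {S : Type*} [Mul S] [Star S] [Zero S] (T : Set S) : Set S :=
  {s | ∀ t ∈ T, ∀ u : S, t * u * s = 0}

/-- `P(S)^⊥ = {T^⊥ : T ⊆ S}`. -/
def Pperp (S : Type*) [Mul S] [Star S] [Zero S] : Set (Set S) := {A | ∃ T : Set S, A = pAnn T}

/-- `P(S)^∇ = {T^∇ : T ⊆ S}`. -/
def Pnabla (S : Type*) [Mul S] [Star S] [Zero S] : Set (Set S) := {A | ∃ T : Set S, A = nAnn T}

/-- `A` is `∇`-finite: for every `B ∈ P(S)^⊥` with `B ⊆ A` and `B^∇ = A^∇`, `B = A`. -/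
def NablaFinite {S : Type*} [Mul S] [Star S] [Zero S] (A : Set S) : Prop :=
  ∀ B ∈ Pperp S, B ⊆ A → nAnn B = nAnn A → B = A

section helpers
variable {S : Type*} [SemigroupWithZero S] [StarMul S]

lemma star_zero' : star (0 : S) = 0 := by
  have h : star (0 : S) * 0 = 0 := mul_zero _
  have h2 : star (star (0 : S) * 0) = star (0:S) * 0 := by
    rw [star_mul, star_star]
  rw [h] at h2
  exact h2

lemma prop' (hp : ∀ s : S, star s * s = 0 → s = 0) (s : S) (h : s * star s = 0) : s = 0 := by
  have : star s = 0 := hp _ (by rwa [star_star])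
  rw [← star_star s, this, star_zero']

/-- `p* p x = 0` implies `p x = 0`. -/
lemma cancel (hp : ∀ s : S, star s * s = 0 → s = 0) (p x : S) (h : star p * p * x = 0) :
    p * x = 0 := by
  apply hp
  rw [star_mul, mul_assoc, ← mul_assoc (star p), h, mul_zero]

def R (s t : S) : Prop := ∀ u, s * u * t = 0

lemma R.star_left (hp : ∀ s : S, star s * s = 0 → s = 0) {s t : S} (h : R s t) :
    R (star s) t := by
  intro u
  apply hp
  have := h (star s * u)
  rw [star_mul, star_mul, star_star]
  calc _ = star t * star u * (s * (star s * u) * t) := by simp only [mul_assoc]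
    _ = 0 := by rw [this, mul_zero]

lemma R.star_right (hp : ∀ s : S, star s * s = 0 → s = 0) {s t : S} (h : R s t) :
    R s (star t) := by
  intro u
  apply prop' hp
  have := h (u * star t)
  rw [star_mul, star_mul, star_star]
  calc _ = (s * (u * star t) * t) * (star u * star s) := by simp only [mul_assoc]
    _ = 0 := by rw [this, zero_mul]

lemma R.symm (hp : ∀ s : S, star s * s = 0 → s = 0) {s t : S} (h : R s t) : R t s := by
  intro u
  have h1 := (h.star_left hp).star_right hp (star u)
  have h2 := congrArg star h1
  simpa [star_zero', mul_assoc] using h2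

lemma R.mul (hp : ∀ s : S, star s * s = 0 → s = 0) {s t : S} (h : R s t) : s * t = 0 := by
  apply hp
  apply hp
  have := h (t * star t * star s * s)
  simp only [star_mul, star_star]
  calc _ = star t * star s * (s * (t * star t * star s * s) * t) := by simp only [mul_assoc]
    _ = 0 := by rw [this, mul_zero]

lemma R.mul_right {s t : S} (h : R s t) (v : S) : R s (t * v) := by
  intro u
  rw [← mul_assoc, h, zero_mul]

lemma R.mul_left {s t : S} (h : R s t) (v : S) : R s (v * t) := by
  intro u
  have := h (u * v)
  simpa only [mul_assoc] using this

lemma R.self (hp : ∀ s : S, star s * s = 0 → s = 0) {s : S} (h : R s s) : s = 0 :=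
  hp _ (R.mul hp (h.star_left hp))

lemma mem_nAnn {T : Set S} {s : S} : s ∈ nAnn T ↔ ∀ t ∈ T, R t s := Iff.rfl

lemma nAnn_anti {T U : Set S} (h : T ⊆ U) : nAnn U ⊆ nAnn T := fun _ hs t ht => hs t (h ht)

lemma nAnn_star (hp : ∀ s : S, star s * s = 0 → s = 0) {T : Set S} {s : S} (h : s ∈ nAnn T) :
    star s ∈ nAnn T := fun t ht => R.star_right hp (h t ht)

lemma sub_nn (hp : ∀ s : S, star s * s = 0 → s = 0) (T : Set S) : T ⊆ nAnn (nAnn T) :=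
  fun t ht _ hs => R.symm hp (hs t ht)

lemma nnn (hp : ∀ s : S, star s * s = 0 → s = 0) (T : Set S) :
    nAnn (nAnn (nAnn T)) = nAnn T :=
  Set.Subset.antisymm (nAnn_anti (sub_nn hp T)) (sub_nn hp _)

lemma nAnn_ml {T : Set S} {s : S} (h : s ∈ nAnn T) (v : S) : v * s ∈ nAnn T :=
  fun t ht => R.mul_left (h t ht) v

lemma nAnn_mr {T : Set S} {s : S} (h : s ∈ nAnn T) (v : S) : s * v ∈ nAnn T :=
  fun t ht => R.mul_right (h t ht) v

lemma pAnn_anti {T U : Set S} (h : T ⊆ U) : pAnn U ⊆ pAnn T := fun _ hs t ht => hs t (h ht)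

lemma pAnn_star {T : Set S} {s : S} (h : s ∈ pAnn T) : star s ∈ pAnn T :=
  fun t ht => ⟨by rw [star_star]; exact (h t ht).2, (h t ht).1⟩

/-- `s S s* ⊆ T^⊥`, `s* S s ⊆ T^⊥` for `s` in `T^⊥`, in mixed form. -/
lemma pAnn_mul {T : Set S} {s s' : S} (h : s ∈ pAnn T) (h' : s' ∈ pAnn T) (v : S) :
    s * v * s' ∈ pAnn T := fun t ht => by
  refine ⟨?_, ?_⟩
  · rw [star_mul, ← mul_assoc, (h' t ht).1, zero_mul]
  · rw [← mul_assoc, ← mul_assoc, (h t ht).2, zero_mul, zero_mul]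

lemma pAnn_zero (T : Set S) : (0 : S) ∈ pAnn T := fun t _ => by
  rw [star_zero', mul_zero]; exact ⟨rfl, rfl⟩

lemma sub_pp {T : Set S} (hT : ∀ t ∈ T, star t ∈ T) : T ⊆ pAnn (pAnn T) := by
  intro t ht s hs
  have h1 := congrArg star (hs t ht).1
  have h2 := congrArg star (hs _ (hT t ht)).1
  rw [star_mul, star_star, star_zero'] at h1 h2
  rw [star_star] at h2
  exact ⟨h1, h2⟩

lemma ppp (hp : ∀ s : S, star s * s = 0 → s = 0) (T : Set S) :
    pAnn (pAnn (pAnn T)) = pAnn T := by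
  apply Set.Subset.antisymm _ (sub_pp fun t ht => pAnn_star ht)
  intro s hs t ht
  have : star t * t ∈ pAnn (pAnn T) := by
    intro r hr
    have h1 : r * star t = 0 := by
      have := congrArg star (hr t ht).1
      rwa [star_mul, star_star, star_zero'] at this
    have h2 : r * (star t * t) = 0 := by rw [← mul_assoc, h1, zero_mul]
    refine ⟨?_, h2⟩
    rw [star_mul, star_star, h2]
  exact ⟨cancel hp _ _ (hs _ this).1, cancel hp _ _ (hs _ this).2⟩

lemma Pperp_pp (hp : ∀ s : S, star s * s = 0 → s = 0) {B : Set S} (hB : B ∈ Pperp S) :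
    pAnn (pAnn B) = B := by
  obtain ⟨T, rfl⟩ := hB
  exact ppp hp T

lemma Pperp_star {B : Set S} (hB : B ∈ Pperp S) {b : S} (h : b ∈ B) : star b ∈ B := by
  obtain ⟨T, rfl⟩ := hB
  exact pAnn_star h

lemma Pperp_mul {B : Set S} (hB : B ∈ Pperp S) {b b' : S} (h : b ∈ B) (h' : b' ∈ B) (v : S) :
    b * v * b' ∈ B := by
  obtain ⟨T, rfl⟩ := hB
  exact pAnn_mul h h' v

lemma nAnn_sub_pAnn (hp : ∀ s : S, star s * s = 0 → s = 0) (T : Set S) : nAnn T ⊆ pAnn T :=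
  fun _ hs t ht => ⟨R.mul hp (R.star_right hp (hs t ht)), R.mul hp (hs t ht)⟩

lemma pAnn_nAnn (hp : ∀ s : S, star s * s = 0 → s = 0) (T : Set S) :
    pAnn (nAnn T) = nAnn (nAnn T) := by
  apply Set.Subset.antisymm _ (nAnn_sub_pAnn hp _)
  intro s hs t ht u
  exact (hs _ (nAnn_mr ht u)).2

lemma pp_sub_nn (hp : ∀ s : S, star s * s = 0 → s = 0) (T : Set S) :
    pAnn (pAnn T) ⊆ nAnn (nAnn T) := by
  rw [← pAnn_nAnn hp]
  exact pAnn_anti (nAnn_sub_pAnn hp T)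

lemma nAnn_pp (hp : ∀ s : S, star s * s = 0 → s = 0) {T : Set S} (hT : ∀ t ∈ T, star t ∈ T) :
    nAnn (pAnn (pAnn T)) = nAnn T := by
  apply Set.Subset.antisymm (nAnn_anti (sub_pp hT))
  rw [← nnn hp T]
  exact nAnn_anti (pp_sub_nn hp T)

lemma Pperp_inter (hp : ∀ s : S, star s * s = 0 → s = 0) {B : Set S} (hB : B ∈ Pperp S)
    (J : Set S) : B ∩ nAnn J ∈ Pperp S := by
  obtain ⟨T, rfl⟩ := hB
  refine ⟨T ∪ nAnn (nAnn J), ?_⟩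
  have e : nAnn J = pAnn (nAnn (nAnn J)) := by rw [pAnn_nAnn hp (nAnn J), nnn hp J]
  conv_lhs => rw [e]
  ext s
  constructor
  · rintro ⟨h1, h2⟩ t (ht | ht)
    · exact h1 t ht
    · exact h2 t ht
  · intro h
    exact ⟨fun t ht => h t (Or.inl ht), fun t ht => h t (Or.inr ht)⟩

lemma cut_aux (hp : ∀ s : S, star s * s = 0 → s = 0) {T J B : Set S}
    (hT : ∀ t ∈ T, t ∈ B ∨ t ∈ nAnn (nAnn J)) {x y : S} (hx : x ∈ pAnn (pAnn T))
    (hI : x ∈ nAnn J) (hy : y ∈ pAnn B) : y * x = 0 := by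
  have hp1 : star y * (y * x * star x * star y) * y ∈ pAnn T := by
    intro t ht
    rcases hT t ht with h | h
    · exact pAnn_mul (pAnn_star hy) hy _ t h
    · have : star y * (y * x * star x * star y) * y ∈ nAnn J := by
        have := nAnn_mr (nAnn_ml hI (star y * y)) (star x * star y * y)
        simpa only [mul_assoc] using this
      have h2 : star y * (y * x * star x * star y) * y ∈ nAnn (nAnn (nAnn J)) := sub_nn hp _ this
      exact nAnn_sub_pAnn hp _ h2 t h
  have h := (hx _ hp1).2
  apply hp
  apply hp
  simp only [star_mul, star_star]
  calc _ = star x * (star y * (y * x * star x * star y) * y * x) := by simp only [mul_assoc]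
    _ = 0 := by rw [h, mul_zero]

lemma cut (hp : ∀ s : S, star s * s = 0 → s = 0) {T J B : Set S} (hB : B ∈ Pperp S)
    (hT : ∀ t ∈ T, t ∈ B ∨ t ∈ nAnn (nAnn J)) {x : S} (hx : x ∈ pAnn (pAnn T))
    (hI : x ∈ nAnn J) : x ∈ B := by
  rw [← Pperp_pp hp hB]
  exact fun y hy => ⟨cut_aux hp hT (pAnn_star hx) (nAnn_star hp hI) hy, cut_aux hp hT hx hI hy⟩

/-- If `x ∈ (C ∩ I)^∇` and `c ∈ C` then `c u x ∈ I^∇`. -/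
lemma cux (hp : ∀ s : S, star s * s = 0 → s = 0) {C J : Set S} (hC : C ∈ Pperp S) {x c : S}
    (hx : x ∈ nAnn (C ∩ nAnn J)) (hc : c ∈ C) (u : S) : c * u * x ∈ nAnn (nAnn J) := by
  intro w hw v
  have hm : star c * (star v * star w * w * v) * c ∈ C ∩ nAnn J := by
    refine ⟨Pperp_mul hC (Pperp_star hC hc) hc _, ?_⟩
    have := nAnn_mr (nAnn_ml hw (star c * star v * star w)) (v * c)
    simpa only [mul_assoc] using this
  have h := hx _ hm u
  have := cancel hp (w * v * c) (u * x) (by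
    simp only [star_mul]
    simpa only [mul_assoc] using h)
  simpa only [mul_assoc] using this

lemma fin_inter (hp : ∀ s : S, star s * s = 0 → s = 0) {B : Set S} (hB : B ∈ Pperp S)
    (hf : NablaFinite B) (J : Set S) : NablaFinite (B ∩ nAnn J) := by
  intro C hC hCB hn
  have hE := Pperp_inter hp hB (nAnn J)
  set T := C ∪ (B ∩ nAnn (nAnn J)) with hTdef
  have hTs : ∀ t ∈ T, star t ∈ T := by
    rintro t (h | h)
    · exact Or.inl (Pperp_star hC h)
    · exact Or.inr (Pperp_star hE h)
  have hTB : T ⊆ B := Set.union_subset (fun x h => (hCB h).1) (fun x h => h.1)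
  have hD : pAnn (pAnn T) = B := by
    apply hf _ ⟨_, rfl⟩
    · rw [← Pperp_pp hp hB]
      exact pAnn_anti (pAnn_anti hTB)
    · rw [nAnn_pp hp hTs]
      apply Set.Subset.antisymm _ (nAnn_anti hTB)
      intro x hx b hb u
      have h1 : x ∈ nAnn (B ∩ nAnn J) := by
        rw [← hn]; exact nAnn_anti Set.subset_union_left hx
      have h2 : x ∈ nAnn (B ∩ nAnn (nAnn J)) := nAnn_anti Set.subset_union_right hx
      have k1 := cux hp hB h1 hb u
      have k2 := cux hp hB h2 hb u
      exact R.self hp (k2 _ k1)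
  apply Set.Subset.antisymm hCB
  rintro x ⟨hx, hI⟩
  rw [← hD] at hx
  exact cut hp hC (fun t ht => ht.imp id (fun h => h.2)) hx hI

lemma uniq_aux (hp : ∀ s : S, star s * s = 0 → s = 0) {A B : Set S} (hA : A ∈ Pnabla S)
    (hB : B ∈ Pperp S) (hf : NablaFinite B)
    (h : ∀ B ∈ Pperp S, NablaFinite B → B ⊆ pAnn A → B = {0}) : nAnn (nAnn B) ⊆ A := by
  have h0 := h _ (Pperp_inter hp hB A) (fin_inter hp hB hf A)
    (fun x hx => nAnn_sub_pAnn hp _ hx.2)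
  have hs : nAnn A ⊆ nAnn B := by
    intro x hx b hb u
    have hm : b * (u * x * star x * star u) * star b ∈ B ∩ nAnn A := by
      refine ⟨Pperp_mul hB hb (Pperp_star hB hb) _, ?_⟩
      have := nAnn_mr (nAnn_ml hx (b * u)) (star x * star u * star b)
      simpa only [mul_assoc] using this
    rw [h0] at hm
    apply prop' hp
    simp only [star_mul]
    simpa only [mul_assoc, Set.mem_singleton_iff] using hm
  obtain ⟨J, rfl⟩ := hA
  rw [← nnn hp J]
  exact nAnn_anti hs

lemma exists_family (S : Type*) [SemigroupWithZero S] [StarMul S] :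
    ∃ M : Set (Set S), Maximal (fun M : Set (Set S) => (∀ B ∈ M, B ∈ Pperp S ∧ NablaFinite B) ∧
      M.Pairwise fun B E => B ⊆ nAnn E) M := by
  apply zorn_subset {M : Set (Set S) | (∀ B ∈ M, B ∈ Pperp S ∧ NablaFinite B) ∧
      M.Pairwise fun B E => B ⊆ nAnn E}
  intro c hc hch
  refine ⟨⋃₀ c, ⟨?_, ?_⟩, fun s hs => Set.subset_sUnion_of_mem hs⟩
  · rintro B ⟨M, hM, hB⟩
    exact (hc hM).1 B hB
  · rw [Set.pairwise_sUnion hch.directedOn]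
    exact fun M hM => (hc hM).2

end helpers

/-- Let `S` be a proper *-semigroup.  There is a unique
`A ∈ P(S)^∇` such that `A = B^∇∇` for some `∇`-finite `B ∈ P(S)^⊥`, while `A^⊥`
contains no `∇`-finite *-annihilator other than `{0}`. -/
theorem stmt_10 {S : Type*} [SemigroupWithZero S] [StarMul S]
    (hproper : ∀ s : S, star s * s = 0 → s = 0) :
    ∃! A : Set S, A ∈ Pnabla S ∧
      (∃ B ∈ Pperp S, NablaFinite B ∧ A = nAnn (nAnn B)) ∧
      (∀ B ∈ Pperp S, NablaFinite B → B ⊆ pAnn A → B = {0}) := by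
  have hp := hproper
  obtain ⟨M, ⟨hM, hMp⟩, hmax⟩ := exists_family S
  have hTs : ∀ t ∈ ⋃₀ M, star t ∈ ⋃₀ M := by
    rintro t ⟨B, hB, ht⟩
    exact ⟨B, hB, Pperp_star (hM B hB).1 ht⟩
  set B := pAnn (pAnn (⋃₀ M)) with hBdef
  have hBi : ∀ E ∈ M, E ⊆ B := fun E hE => (Set.subset_sUnion_of_mem hE).trans (sub_pp hTs)
  have hfin : NablaFinite B := by
    intro C hC hCB hn
    apply Set.Subset.antisymm hCB
    rw [← Pperp_pp hp hC]
    apply pAnn_anti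
    apply pAnn_anti
    apply Set.sUnion_subset
    intro E hE
    have hEp := (hM E hE).1
    have key : C ∩ nAnn (nAnn E) = E := by
      apply (hM E hE).2 _ (Pperp_inter hp hC _)
      · rintro x ⟨hx, hI⟩
        refine cut hp hEp ?_ (hCB hx) hI
        rintro t ⟨F, hF, ht⟩
        by_cases h : F = E
        · left; rwa [← h]
        · right
          rw [nnn hp]
          exact hMp hF hE h ht
      · apply Set.Subset.antisymm
        · intro x hx b hb u
          have hxb : ∀ v, x * v * star b ∈ nAnn C := by
            intro v c hc w
            have h1 := nAnn_mr (cux hp hC hx hc w) (v * star b)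
            have h2 : c * w * x * (v * star b) ∈ nAnn (nAnn E) :=
              nAnn_ml (nAnn_ml (sub_nn hp _ (Pperp_star hEp hb)) v) _
            have := R.self hp (h1 _ h2)
            simpa only [mul_assoc] using this
          have h3 := hxb (star x * star u)
          rw [hn] at h3
          have h4 := h3 b (hBi E hE hb) u
          apply prop' hp
          simp only [star_mul]
          simpa only [mul_assoc] using h4
        · have := nAnn_anti (Set.inter_subset_right : C ∩ nAnn (nAnn E) ⊆ _)
          rwa [nnn hp] at this
    rw [← key]
    exact Set.inter_subset_left
  refine ⟨nAnn (nAnn B), ⟨⟨_, rfl⟩, ⟨B, ⟨_, rfl⟩, hfin, rfl⟩, ?_⟩, ?_⟩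
  · intro E hE hEf hEA
    rw [pAnn_nAnn hp, nnn hp] at hEA
    have hmem : E ∈ M := by
      have := hmax (y := insert E M) ⟨?_, ?_⟩ (Set.subset_insert _ _)
      · exact this (Set.mem_insert _ _)
      · rintro F (rfl | hF)
        · exact ⟨hE, hEf⟩
        · exact hM F hF
      · refine hMp.insert fun F hF _ => ⟨?_, ?_⟩
        · exact hEA.trans (nAnn_anti (hBi F hF))
        · intro f hf e he
          exact R.symm hp (hEA he f (hBi F hF hf))
    apply Set.Subset.antisymm
    · intro e he
      exact R.self hp (hEA he e (hBi E hmem he))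
    · rintro _ rfl
      obtain ⟨T, rfl⟩ := hE
      exact pAnn_zero T
  · rintro A ⟨hA, ⟨B', hB', hf', rfl⟩, h⟩
    apply Set.Subset.antisymm
    · refine uniq_aux hp ⟨_, rfl⟩ hB' hf' ?_
      intro E hE hEf hEA
      rw [pAnn_nAnn hp, nnn hp] at hEA
      have hmem : E ∈ M := by
        have := hmax (y := insert E M) ⟨?_, ?_⟩ (Set.subset_insert _ _)
        · exact this (Set.mem_insert _ _)
        · rintro F (rfl | hF)
          · exact ⟨hE, hEf⟩
          · exact hM F hF
        · refine hMp.insert fun F hF _ => ⟨?_, ?_⟩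
          · exact hEA.trans (nAnn_anti (hBi F hF))
          · intro f hf e he
            exact R.symm hp (hEA he f (hBi F hF hf))
      apply Set.Subset.antisymm
      · intro e he
        exact R.self hp (hEA he e (hBi E hmem he))
      · rintro _ rfl
        obtain ⟨T, rfl⟩ := hE
        exact pAnn_zero T
    · exact uniq_aux hp hA ⟨_, rfl⟩ hfin h

end Stmt10
end

section
/- Let S be a proper *-semigroup and a, b ∈ S. Then {a b}^⊥⊥ = ({a}^⊥⊥ b)^⊥⊥, where {a}^⊥⊥ b = {x b : x ∈ {a}^⊥⊥}. Moreover, if {a}^⊥⊥ ⊆ {b*}^⊥⊥ then {b* a*}^⊥⊥ = {a*}^⊥⊥; in particular the element a b then witnesses {a*}^⊥⊥ ∼ ({a}^⊥⊥ b)^⊥⊥. -/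
namespace Stmt12

/-- The *-annihilator `T^⊥`. -/
def pAnn {S : Type*} [Mul S] [Star S] [Zero S] (T : Set S) : Set S :=
  {s | ∀ t ∈ T, t * star s = 0 ∧ t * s = 0}

/-- `A ∼ B`: there is `s ∈ S` with `{s}^⊥⊥ = A` and `{s*}^⊥⊥ = B`. -/
def Sim {S : Type*} [Mul S] [Star S] [Zero S] (A B : Set S) : Prop :=
  ∃ s : S, pAnn (pAnn {s}) = A ∧ pAnn (pAnn {star s}) = B

theorem star_z {S : Type*} [SemigroupWithZero S] [StarMul S] : star (0 : S) = 0 := by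
  have := star_mul (0 : S) (star (0 : S))
  rwa [zero_mul, star_star, zero_mul] at this

theorem cancel_left {S : Type*} [SemigroupWithZero S] [StarMul S]
    (hp : ∀ s : S, star s * s = 0 → s = 0) (x y : S) (h : star x * (x * y) = 0) : x * y = 0 := by
  apply hp
  rw [star_mul, mul_assoc, h, mul_zero]

theorem cancel_right {S : Type*} [SemigroupWithZero S] [StarMul S]
    (hp : ∀ s : S, star s * s = 0 → s = 0) (x y : S) (h : x * (y * star y) = 0) : x * y = 0 := by
  have h2 : star (x * y) = 0 := by
    apply hp
    rw [star_star, star_mul, mul_assoc, ← mul_assoc y, ← mul_assoc, h, zero_mul]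
  have := congrArg star h2
  rwa [star_star, star_z] at this

theorem mem_pAnn_singleton {S : Type*} [SemigroupWithZero S] [StarMul S] (a s : S) :
    s ∈ pAnn ({a} : Set S) ↔ a * star s = 0 ∧ a * s = 0 := by
  simp [pAnn]

theorem star_mul_self_mem {S : Type*} [SemigroupWithZero S] [StarMul S] (a : S) :
    star a * a ∈ pAnn (pAnn ({a} : Set S)) := by
  intro t ht
  rw [mem_pAnn_singleton] at ht
  have h : t * star a = 0 := by
    have := congrArg star ht.1
    rwa [star_mul, star_star, star_z] at this
  rw [star_mul, star_star, ← mul_assoc, h, zero_mul]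
  exact ⟨rfl, rfl⟩

theorem mul_eq_zero_of_mem {S : Type*} [SemigroupWithZero S] [StarMul S]
    (hp : ∀ s : S, star s * s = 0 → s = 0) (a x u : S)
    (hx : x ∈ pAnn (pAnn ({a} : Set S))) (h : a * u = 0) : x * u = 0 := by
  apply cancel_right hp
  have hm : u * star u ∈ pAnn ({a} : Set S) := by
    rw [mem_pAnn_singleton, star_mul, star_star, ← mul_assoc, h, zero_mul]
    exact ⟨rfl, rfl⟩
  have h1 := congrArg star (hx _ hm).1
  rwa [star_mul, star_star, star_mul, star_star, star_z] at h1

/-- Let `S` be a proper *-semigroup and `a b ∈ S`.  Then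
`{a b}^⊥⊥ = ({a}^⊥⊥ b)^⊥⊥`.  Moreover, if `{a}^⊥⊥ ⊆ {b*}^⊥⊥` then
`{b* a*}^⊥⊥ = {a*}^⊥⊥`; in particular `{a*}^⊥⊥ ∼ ({a}^⊥⊥ b)^⊥⊥`. -/
theorem stmt_12 {S : Type*} [SemigroupWithZero S] [StarMul S]
    (hproper : ∀ s : S, star s * s = 0 → s = 0) (a b : S) :
    pAnn (pAnn {a * b}) = pAnn (pAnn ((fun x => x * b) '' pAnn (pAnn {a}))) ∧
    (pAnn (pAnn {a}) ⊆ pAnn (pAnn {star b}) →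
      pAnn (pAnn {star b * star a}) = pAnn (pAnn {star a}) ∧
      Sim (pAnn (pAnn ({star a} : Set S)))
        (pAnn (pAnn ((fun x => x * b) '' pAnn (pAnn {a}))))) := by
  have h1 : pAnn {a * b} = pAnn ((fun x => x * b) '' pAnn (pAnn {a})) := by
    ext s
    rw [mem_pAnn_singleton]
    constructor
    · rintro ⟨h1, h2⟩ _ ⟨x, hx, rfl⟩
      rw [mul_assoc] at h1 h2
      simp only [mul_assoc]
      exact ⟨mul_eq_zero_of_mem hproper a x _ hx h1, mul_eq_zero_of_mem hproper a x _ hx h2⟩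
    · intro h
      obtain ⟨h1, h2⟩ := h _ ⟨_, star_mul_self_mem a, rfl⟩
      simp only [mul_assoc] at h1 h2 ⊢
      exact ⟨cancel_left hproper _ _ h1, cancel_left hproper _ _ h2⟩
  have h1' := congrArg pAnn h1
  refine ⟨h1', fun hsub => ?_⟩
  have key : ∀ s : S, star b * star a * s = 0 → star a * s = 0 := by
    intro s hs
    have hy := hsub (star_mul_self_mem a)
    have h2 := mul_eq_zero_of_mem hproper (star b) _ (star a * s) hy (by rw [← mul_assoc, hs])
    rw [mul_assoc] at h2
    have h3 := cancel_left hproper _ _ h2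
    have h4 := cancel_left hproper (star a) s (by rwa [star_star])
    exact h4
  have h2 : pAnn {star b * star a} = pAnn {star a} := by
    ext s
    rw [mem_pAnn_singleton, mem_pAnn_singleton]
    constructor
    · rintro ⟨h1, h2⟩
      exact ⟨key _ h1, key _ h2⟩
    · rintro ⟨h1, h2⟩
      rw [mul_assoc, mul_assoc, h1, h2, mul_zero]
      exact ⟨rfl, rfl⟩
  refine ⟨congrArg pAnn h2, star b * star a, congrArg pAnn h2, ?_⟩
  rw [star_mul, star_star, star_star]
  exact h1'

end Stmt12
end
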